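/- For data vectors v over Σ of sufficiently large order, v is the Parikh image of some anti-cycle if and only if v is non-degenerate. -/

import Mathlib

/-- Atoms: a countably infinite set. -/
abbrev Atom := ℕ

/-- Letters of the alphabet Σ: pairs (a, {b,c}) with b ≠ c and a ∉ {b,c}. -/
abbrev Letter := {p : Atom × Finset Atom // p.2.card = 2 ∧ p.1 ∉ p.2}

def Letter.src (α : Letter) : Atom := α.1.1

def Letter.trg (α : Letter) : Finset Atom := α.1.2

open Letter

/-- The set of sources of letters appearing in a finite multiset `v` over Σ. -/
def srcs (v : Letter →₀ ℕ) : Finset Atom := v.support.image Letter.src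

/-- Edges of the source graph `G(v)`: `(d,e)` is an edge iff `d,e` are distinct
vertices and some letter in `v` has source `d` and target not containing `e`. -/
def Edge (v : Letter →₀ ℕ) (d e : Atom) : Prop :=
  d ≠ e ∧ d ∈ srcs v ∧ e ∈ srcs v ∧ ∃ α ∈ v.support, src α = d ∧ e ∉ trg α


/-- Anti-paths: nonempty words over Σ such that the source of each letter does
not belong to the target of the preceding letter. -/
def IsAntiPath (w : List Letter) : Prop :=
  w ≠ [] ∧ w.Chain' (fun α β => src β ∉ trg α)

/-- Anti-cycles: anti-paths whose first source does not belong to the last target. -/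
def IsAntiCycle (w : List Letter) : Prop :=
  IsAntiPath w ∧ ∀ h : w ≠ [], src (w.head h) ∉ trg (w.getLast h)

/-- In-neighbourhood of a vertex in the source graph. -/
def inn (v : Letter →₀ ℕ) (e : Atom) : Set Atom := {d : Atom | Edge v d e}

/-- Letters of `v` that can precede a `d`-sourced letter (and have source ≠ d). -/
def precSet (v : Letter →₀ ℕ) (d : Atom) : Set Letter :=
  {α : Letter | α ∈ v.support ∧ src α ≠ d ∧ d ∉ trg α}

open Classical in
/-- Total multiplicity in `v` of the letters belonging to a set `P`. -/
noncomputable def mass (v : Letter →₀ ℕ) (P : Set Letter) : ℕ :=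
  ∑ α ∈ v.support, if α ∈ P then v α else 0

/-- Non-degeneracy of a data vector `v` over Σ:
(1) every vertex of the source graph has an in-neighbour;
(2) for distinct sources d,e the union of in-neighbourhoods is not contained in {d,e};
(3) for distinct sources d,e the total multiplicity of letters that can precede
a d- or e-sourced letter is at least 2. -/
def NonDeg (v : Letter →₀ ℕ) : Prop :=
  (∀ e ∈ srcs v, (inn v e).Nonempty) ∧
  (∀ d ∈ srcs v, ∀ e ∈ srcs v, d ≠ e → ¬ (inn v d ∪ inn v e ⊆ {d, e})) ∧
  (∀ d ∈ srcs v, ∀ e ∈ srcs v, d ≠ e → 2 ≤ mass v (precSet v d ∪ precSet v e))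

/-! ### Basic facts -/

/-- `β` may follow `α` in an anti-path. -/
def Follows (α β : Letter) : Prop := src β ∉ trg α

lemma src_notMem_trg (α : Letter) : src α ∉ trg α := α.2.2

lemma trg_card (α : Letter) : (trg α).card = 2 := α.2.1

/-- Convenient form of anti-cycles. -/
def AC (w : List Letter) : Prop :=
  w ≠ [] ∧ w.IsChain Follows ∧ ∀ x ∈ w.getLast?, ∀ y ∈ w.head?, Follows x y

lemma isAntiCycle_iff (w : List Letter) : IsAntiCycle w ↔ AC w := by
  unfold IsAntiCycle IsAntiPath AC
  constructor
  · rintro ⟨⟨h1, h2⟩, h3⟩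
    refine ⟨h1, h2, ?_⟩
    intro x hx y hy
    rw [List.getLast?_eq_getLast_of_ne_nil h1] at hx
    rw [List.head?_eq_some_head h1] at hy
    simp only [Option.mem_def, Option.some.injEq] at hx hy
    subst hx hy
    exact h3 h1
  · rintro ⟨h1, h2, h3⟩
    refine ⟨⟨h1, h2⟩, fun h => ?_⟩
    exact h3 _ (by rw [List.getLast?_eq_getLast_of_ne_nil h1]; rfl) _
      (by rw [List.head?_eq_some_head h1]; rfl)

lemma mem_srcs {v : Letter →₀ ℕ} {a : Atom} :
    a ∈ srcs v ↔ ∃ α ∈ v.support, src α = a := by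
  simp [srcs]

/-! ### Insertion -/

lemma AC_insert_mid {l1 l2 : List Letter} {x y β : Letter}
    (h : AC (l1 ++ x :: y :: l2)) (hx : Follows x β) (hy : Follows β y) :
    AC (l1 ++ x :: β :: y :: l2) := by
  obtain ⟨_, h2, h3⟩ := h
  refine ⟨by simp, ?_, ?_⟩
  · simp only [List.isChain_append, List.isChain_cons_cons] at h2 ⊢
    refine ⟨h2.1, ⟨hx, hy, h2.2.1.2⟩, ?_⟩
    simpa using h2.2.2
  · cases l1 <;> simpa [List.getLast?_cons, List.getLast?_append] using h3

lemma AC_insert_same {l1 l2 : List Letter} {x β : Letter}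
    (h : AC (l1 ++ x :: l2)) (hx : src β = src x) :
    AC (l1 ++ β :: x :: l2) := by
  obtain ⟨_, h2, h3⟩ := h
  have hb : Follows β x := by unfold Follows; rw [← hx]; exact src_notMem_trg β
  have hf : ∀ z, Follows z x → Follows z β := by intro z hz; unfold Follows at *; rwa [hx]
  refine ⟨by simp, ?_, ?_⟩
  · simp only [List.isChain_append, List.isChain_cons_cons] at h2 ⊢
    refine ⟨h2.1, ⟨hb, h2.2.1⟩, ?_⟩
    intro z hz y hy
    simp only [List.head?_cons, Option.mem_def, Option.some.injEq] at hy
    subst hy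
    exact hf _ (h2.2.2 z hz x (by simp))
  · cases l1 with
    | nil =>
      intro z hz y hy
      simp only [List.nil_append, List.head?_cons, Option.mem_def, Option.some.injEq] at hy
      subst hy
      exact hf _ (h3 z (by simpa [List.getLast?_cons] using hz) x (by simp))
    | cons a l => simpa [List.getLast?_cons, List.getLast?_append] using h3

lemma exists_consecutive (p q : Letter → Bool) :
    ∀ (l : List Letter) (a : Letter), l.countP q + 1 < (a :: l).countP p →
      ∃ l1 x y l2, a :: l = l1 ++ x :: y :: l2 ∧ p x ∧ ¬ q y := by
  intro l
  induction l with
  | nil => intro a h; simp [List.countP_cons] at h; split_ifs at h <;> omega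
  | cons b l ih =>
    intro a h
    by_cases hab : p a ∧ ¬ q b
    · exact ⟨[], a, b, l, rfl, hab.1, hab.2⟩
    · have : l.countP q + 1 < (b :: l).countP p := by
        rw [List.countP_cons (a := a), List.countP_cons (p := q)] at h
        by_cases h1 : p a <;> by_cases h2 : q b <;> simp_all <;> omega
      obtain ⟨l1, x, y, l2, h1, h2⟩ := ih b this
      exact ⟨a :: l1, x, y, l2, by simp [h1], h2⟩

lemma countP_src_mem_le (w : List Letter) (B : Finset Atom) (c : ℕ)
    (h : ∀ b, (w.map src).count b ≤ c) :
    w.countP (fun α => decide (src α ∈ B)) ≤ B.card * c := by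
  induction B using Finset.induction_on with
  | empty => simp
  | insert b B hb ih =>
    rw [Finset.card_insert_of_notMem hb, Nat.succ_mul]
    have h1 := h b
    rw [List.count, List.countP_map] at h1
    have : w.countP (fun α => decide (src α ∈ insert b B)) ≤
        w.countP (fun α => decide (src α ∈ B)) + w.countP ((fun x => x == b) ∘ src) := by
      clear h ih h1
      induction w with
      | nil => simp
      | cons a w ih =>
        rw [List.countP_cons, List.countP_cons, List.countP_cons]
        have h3 : (if decide (src a ∈ insert b B) = true then 1 else 0) ≤
            (if decide (src a ∈ B) = true then 1 else 0) +
            (if ((fun x => x == b) ∘ src) a = true then 1 else 0) := by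
          by_cases h1 : src a = b <;> by_cases h2 : src a ∈ B <;> simp [h1, h2]
        omega
    omega

/-- Insertion of a letter which many letters of `w` do not target. -/
lemma AC_insert {w : List Letter} (hw : AC w) (c : ℕ)
    (hc : ∀ b, (w.map src).count b ≤ c) (β : Letter) (T : Finset Letter)
    (hT : ∀ α ∈ T, α ∈ w ∧ Follows α β) (hcard : 2 * c + 1 < T.card) :
    ∃ w', AC w' ∧ w'.Perm (β :: w) := by
  classical
  obtain ⟨a, l, rfl⟩ : ∃ a l, w = a :: l := List.exists_cons_of_ne_nil hw.1
  have h1 : T.card ≤ (a :: l).countP (fun α => decide (α ∈ T)) := by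
    rw [List.countP_eq_length_filter]
    calc T.card ≤ ((a :: l).filter (fun α => decide (α ∈ T))).toFinset.card := by
          apply Finset.card_le_card
          intro α hα
          simp only [List.mem_toFinset, List.mem_filter, decide_eq_true_eq]
          exact ⟨(hT α hα).1, hα⟩
      _ ≤ _ := List.toFinset_card_le _
  have h2 := countP_src_mem_le (a :: l) (trg β) c hc
  rw [trg_card] at h2
  have h3 : l.countP (fun α => decide (src α ∈ trg β)) ≤
      (a :: l).countP (fun α => decide (src α ∈ trg β)) :=
    (List.sublist_cons_self a l).countP_le
  obtain ⟨l1, x, y, l2, e, hx, hy⟩ := exists_consecutive (fun α => decide (α ∈ T))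
    (fun α => decide (src α ∈ trg β)) l a (by omega)
  rw [e] at hw ⊢
  refine ⟨l1 ++ x :: β :: y :: l2, AC_insert_mid hw (hT x (by simpa using hx)).2 ?_, ?_⟩
  · simpa [Follows] using hy
  · have := List.perm_middle (a := β) (l₁ := l1 ++ [x]) (l₂ := y :: l2)
    simpa using this

/-! ### Maximal words -/

lemma exists_maximal (v : Letter →₀ ℕ) (G : List Letter → Prop)
    (hG : ∀ w, G w → ∀ α, w.count α ≤ v α) (w0 : List Letter) (h0 : G w0) :
    ∃ w, G w ∧ ∀ w', G w' → w'.length ≤ w.length := by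
  classical
  have hb : ∀ w, G w → w.length ≤ (Finsupp.toMultiset v).card := by
    intro w hw
    have : (w : Multiset Letter) ≤ Finsupp.toMultiset v := by
      rw [Multiset.le_iff_count]
      intro α
      rw [Finsupp.count_toMultiset, Multiset.coe_count]
      convert hG w hw α
    simpa using Multiset.card_le_card this
  let Q : ℕ → Prop := fun n => ∃ w, G w ∧ w.length = n
  have hQ : Q (Nat.findGreatest Q (Finsupp.toMultiset v).card) :=
    Nat.findGreatest_spec (P := Q) (hb w0 h0) ⟨w0, h0, rfl⟩
  obtain ⟨w, hw, hl⟩ := hQ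
  refine ⟨w, hw, fun w' hw' => ?_⟩
  rw [hl]
  exact Nat.le_findGreatest (hb w' hw') ⟨w', hw', rfl⟩

/-- Once all sources occur, all letters can be inserted. -/
lemma complete_letters (v : Letter →₀ ℕ) (w0 : List Letter) (h0 : AC w0)
    (hc : ∀ α, w0.count α ≤ v α) (hs : ∀ a ∈ srcs v, ∃ α ∈ w0, src α = a) :
    ∃ w, AC w ∧ ∀ α, w.count α = v α := by
  obtain ⟨w, ⟨h1, h2, h3⟩, hmax⟩ := exists_maximal v
    (fun w => AC w ∧ (∀ α, w.count α ≤ v α) ∧ ∀ a ∈ srcs v, ∃ α ∈ w, src α = a)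
    (fun w hw => hw.2.1) w0 ⟨h0, hc, hs⟩
  refine ⟨w, h1, fun α => le_antisymm (h2 α) ?_⟩
  by_contra hlt
  push Not at hlt
  obtain ⟨x, hx, hxs⟩ := h3 (src α) (mem_srcs.2 ⟨α, by
    rw [Finsupp.mem_support_iff]; omega, rfl⟩)
  obtain ⟨l1, l2, rfl⟩ := List.append_of_mem hx
  have hp : (l1 ++ α :: x :: l2).Perm (α :: (l1 ++ x :: l2)) := List.perm_middle
  have := hmax (l1 ++ α :: x :: l2) ⟨AC_insert_same h1 hxs.symm, ?_, ?_⟩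
  · simp at this
  · intro β
    rw [hp.count_eq, List.count_cons]
    have := h2 β
    split_ifs with h
    · simp only [beq_iff_eq] at h; subst h; omega
    · omega
  · intro a ha
    obtain ⟨γ, hγ, e⟩ := h3 a ha
    exact ⟨γ, hp.mem_iff.2 (List.mem_cons_of_mem _ hγ), e⟩

/-- All sources can be inserted. -/
lemma complete_sources (v : Letter →₀ ℕ) (S : Finset Letter) (c : ℕ) (hc1 : 1 ≤ c)
    (w0 : List Letter) (h0 : AC w0)
    (hc : ∀ α, w0.count α ≤ v α) (hS : ∀ α ∈ S, α ∈ w0)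
    (hcnt : ∀ b, (w0.map src).count b ≤ c)
    (hin : ∀ β ∈ v.support, (∀ α ∈ w0, src α ≠ src β) →
      2 * c + 1 < (S.filter (fun α => src β ∉ trg α)).card) :
    ∃ w, AC w ∧ (∀ α, w.count α ≤ v α) ∧ ∀ a ∈ srcs v, ∃ α ∈ w, src α = a := by
  obtain ⟨w, ⟨h1, h2, h3, h4⟩, hmax⟩ := exists_maximal v
    (fun w => AC w ∧ (∀ α, w.count α ≤ v α) ∧ (∀ α ∈ w0, α ∈ w) ∧
      (∀ b, (w.map src).count b ≤ c))
    (fun w hw => hw.2.1) w0 ⟨h0, hc, fun _ h => h, hcnt⟩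
  refine ⟨w, h1, h2, ?_⟩
  intro a ha
  by_contra hno
  push Not at hno
  obtain ⟨β, hβ, rfl⟩ := mem_srcs.1 ha
  obtain ⟨w', hw', hp⟩ := AC_insert h1 c h4 β (S.filter (fun α => src β ∉ trg α))
    (by
      intro α hα
      rw [Finset.mem_filter] at hα
      exact ⟨h3 α (hS α hα.1), hα.2⟩)
    (hin β hβ (fun α hα => hno α (h3 α hα)))
  have := hmax w' ⟨hw', ?_, ?_, ?_⟩
  · rw [hp.length_eq] at this; simp at this
  · intro γ
    rw [hp.count_eq, List.count_cons]
    have := h2 γ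
    split_ifs with h
    · simp only [beq_iff_eq] at h
      subst h
      have h5 : w.count β = 0 := List.count_eq_zero.2 (fun hm => hno β hm rfl)
      have h6 := Finsupp.mem_support_iff.1 hβ
      omega
    · omega
  · intro α hα
    exact hp.mem_iff.2 (List.mem_cons_of_mem _ (h3 α hα))
  · intro b
    rw [(hp.map src).count_eq, List.map_cons, List.count_cons]
    have := h4 b
    split_ifs with h
    · simp only [beq_iff_eq] at h
      subst h
      have h5 : (w.map src).count (src β) = 0 := List.count_eq_zero.2 (by simpa using hno)
      omega
    · omega

/-! ### Independent sets -/

lemma exists_independent (t : Atom → Finset Atom) (ht : ∀ a, (t a).card ≤ 2) :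
    ∀ (m : ℕ) (A : Finset Atom), 5 * m ≤ A.card →
      ∃ S ⊆ A, S.card = m ∧ ∀ x ∈ S, ∀ y ∈ S, x ≠ y → y ∉ t x := by
  intro m
  induction m with
  | zero => intro A _; exact ⟨∅, by simp, by simp, by simp⟩
  | succ m ih =>
    intro A hA
    have hne : A.Nonempty := by rw [← Finset.card_pos]; omega
    have hsum : ∑ a ∈ A, (A.filter (fun b => a ∈ t b)).card ≤ ∑ a ∈ A, 2 := by
      have e := Finset.sum_card_bipartiteAbove_eq_sum_card_bipartiteBelow
        (s := A) (t := A) (fun a b => a ∈ t b)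
      simp only [Finset.bipartiteAbove, Finset.bipartiteBelow] at e
      rw [e]
      apply Finset.sum_le_sum
      intro b _
      refine le_trans (Finset.card_le_card ?_) (ht b)
      intro x hx
      exact (Finset.mem_filter.1 hx).2
    obtain ⟨a, ha, ha2⟩ := Finset.exists_le_of_sum_le hne hsum
    set D := insert a (t a ∪ A.filter (fun b => a ∈ t b)) with hD
    have hDc : D.card ≤ 5 := by
      have h1 := Finset.card_insert_le a (t a ∪ A.filter (fun b => a ∈ t b))
      have h2 := Finset.card_union_le (t a) (A.filter (fun b => a ∈ t b))
      have h3 := ht a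
      rw [hD]
      omega
    have h4 := Finset.le_card_sdiff D A
    obtain ⟨S, hS, hSc, hSi⟩ := ih (A \ D) (by omega)
    have hmem : ∀ x ∈ S, x ∈ A ∧ x ≠ a ∧ x ∉ t a ∧ a ∉ t x := by
      intro x hx
      have := hS hx
      rw [Finset.mem_sdiff, hD] at this
      simp only [Finset.mem_insert, Finset.mem_union, Finset.mem_filter, not_or, not_and] at this
      exact ⟨this.1, this.2.1, this.2.2.1, this.2.2.2 this.1⟩
    refine ⟨insert a S, ?_, ?_, ?_⟩
    · intro x hx
      rcases Finset.mem_insert.1 hx with rfl | hx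
      · exact ha
      · exact (hmem x hx).1
    · rw [Finset.card_insert_of_notMem (fun h => (hmem a h).2.1 rfl), hSc]
    · intro x hx y hy hxy
      rcases Finset.mem_insert.1 hx with h1 | h1 <;> rcases Finset.mem_insert.1 hy with h2 | h2
      · exact absurd (h1.trans h2.symm) hxy
      · rw [h1]; exact (hmem y h2).2.2.1
      · rw [h2]; exact (hmem x h1).2.2.2
      · exact hSi x h1 y h2 hxy

/-- A set of `m` pairwise compatible letters with distinct sources. -/
lemma exists_core (v : Letter →₀ ℕ) (m : ℕ) (h : 5 * m ≤ (srcs v).card) :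
    ∃ S : Finset Letter, S.card = m ∧ S ⊆ v.support ∧ (∀ x ∈ S, ∀ y ∈ S, Follows x y) ∧
      Set.InjOn src (S : Set Letter) := by
  classical
  have hex : ∀ a, ∃ α : Letter, a ∈ srcs v → α ∈ v.support ∧ src α = a := by
    intro a
    by_cases ha : a ∈ srcs v
    · obtain ⟨α, h1, h2⟩ := mem_srcs.1 ha
      exact ⟨α, fun _ => ⟨h1, h2⟩⟩
    · exact ⟨⟨(0, {1, 2}), by decide⟩, fun h => absurd h ha⟩
  choose ex hex using hex
  obtain ⟨A, hA, hAc, hAi⟩ := exists_independent (fun a => trg (ex a))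
    (fun a => (trg_card _).le) m (srcs v) h
  have hsrc : ∀ a ∈ A, src (ex a) = a := fun a ha => (hex a (hA ha)).2
  refine ⟨A.image ex, ?_, ?_, ?_, ?_⟩
  · rw [Finset.card_image_of_injOn, hAc]
    intro a ha b hb hab
    rw [← hsrc a ha, ← hsrc b hb, hab]
  · intro x hx
    obtain ⟨a, ha, rfl⟩ := Finset.mem_image.1 hx
    exact (hex a (hA ha)).1
  · intro x hx y hy
    obtain ⟨a, ha, rfl⟩ := Finset.mem_image.1 hx
    obtain ⟨b, hb, rfl⟩ := Finset.mem_image.1 hy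
    unfold Follows
    by_cases hab : a = b
    · subst hab; exact src_notMem_trg _
    · rw [hsrc b hb]; exact hAi a ha b hb hab
  · intro x hx y hy hxy
    obtain ⟨a, ha, rfl⟩ := Finset.mem_image.1 (Finset.mem_coe.1 hx)
    obtain ⟨b, hb, rfl⟩ := Finset.mem_image.1 (Finset.mem_coe.1 hy)
    rw [hsrc a ha, hsrc b hb] at hxy
    rw [hxy]

/-! ### Closing up anti-paths through the core -/

lemma exists_choice (S : Finset Letter) (hinj : Set.InjOn src (S : Set Letter))
    (T : Finset Letter) (hT : T ⊆ S) (L : List Letter) (B : Finset Atom)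
    (h : L.length + B.card < T.card) : ∃ s ∈ T, s ∉ L ∧ src s ∉ B := by
  classical
  by_contra hno
  push Not at hno
  have h1 : T ⊆ L.toFinset ∪ T.filter (fun s => src s ∈ B) := by
    intro s hs
    by_cases hL : s ∈ L
    · simp [hL]
    · simp [hs, hno s hs hL]
  have h2 : (T.filter (fun s => src s ∈ B)).card ≤ B.card := by
    apply Finset.card_le_card_of_injOn src
    · intro s hs
      exact (Finset.mem_filter.1 hs).2
    · intro x hx y hy hxy
      exact hinj (hT (Finset.mem_filter.1 hx).1) (hT (Finset.mem_filter.1 hy).1) hxy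
  have h3 := Finset.card_le_card h1
  have h4 := Finset.card_union_le L.toFinset (T.filter (fun s => src s ∈ B))
  have h5 := List.toFinset_card_le L
  omega

/-- Number of core letters not targeting `x`. -/
def good (S : Finset Letter) (x : Atom) : Finset Letter := S.filter (fun α => x ∉ trg α)

lemma close_path (v : Letter →₀ ℕ) (S : Finset Letter) (hSv : S ⊆ v.support)
    (hSS : ∀ x ∈ S, ∀ y ∈ S, Follows x y) (hinj : Set.InjOn src (S : Set Letter))
    (P : List Letter) (hP : P.IsChain Follows) (hPv : ∀ α, P.count α ≤ v α)
    (hPl : P.length ≤ 5) (hne : P ≠ []) (hS : 20 ≤ S.card)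
    (hgood : 20 ≤ (good S (src (P.head hne))).card) :
    ∃ w, AC w ∧ (∀ α, w.count α ≤ v α) ∧ (∀ α ∈ S, α ∈ w) ∧ (∀ α ∈ P, α ∈ w) ∧
      ∀ b, (w.map src).count b ≤ 6 := by
  classical
  obtain ⟨s1, hs1, hs1P, -⟩ := exists_choice S hinj (good S (src (P.head hne)))
    (Finset.filter_subset _ _) P ∅ (by simp; omega)
  obtain ⟨s2, hs2, hs2P, hs2t⟩ := exists_choice S hinj S (Finset.Subset.refl _) (s1 :: P)
    (trg (P.getLast hne)) (by rw [trg_card]; simp; omega)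
  have hs1S : s1 ∈ S := (Finset.mem_filter.1 hs1).1
  have hs1t : src (P.head hne) ∉ trg s1 := (Finset.mem_filter.1 hs1).2
  have h21 : s2 ≠ s1 := fun h => hs2P (by simp [h])
  have hs2P' : s2 ∉ P := fun h => hs2P (by simp [h])
  set rest := (((S.filter (fun α => α ∉ P)).erase s1).erase s2).toList with hrest
  have hr : ∀ α, α ∈ rest ↔ α ≠ s2 ∧ α ≠ s1 ∧ α ∈ S ∧ α ∉ P := by
    intro α; rw [hrest]; simp
  have hrn : rest.Nodup := Finset.nodup_toList _
  set Q := s2 :: (rest ++ [s1]) with hQ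
  have hQm : ∀ α, α ∈ Q ↔ α ∈ S ∧ α ∉ P := by
    intro α
    rw [hQ]
    simp only [List.mem_cons, List.mem_append, hr, List.not_mem_nil, or_false]
    constructor
    · rintro (rfl | h | rfl)
      · exact ⟨hs2, hs2P'⟩
      · exact h.2.2
      · exact ⟨hs1S, hs1P⟩
    · intro h
      by_cases h1 : α = s2
      · exact Or.inl h1
      · by_cases h2 : α = s1
        · exact Or.inr (Or.inr h2)
        · exact Or.inr (Or.inl ⟨h1, h2, h⟩)
  have hQn : Q.Nodup := by
    rw [hQ, List.nodup_cons, List.nodup_append]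
    refine ⟨by simp [hr, h21], hrn, by simp, ?_⟩
    intro a ha b hb
    simp only [List.mem_singleton] at hb
    subst hb
    exact ((hr a).1 ha).2.1
  have hQs : (Q.map src).Nodup := by
    refine List.Nodup.map_on ?_ hQn
    intro x hx y hy hxy
    exact hinj ((hQm x).1 hx).1 ((hQm y).1 hy).1 hxy
  have hQc : Q.IsChain Follows := by
    apply List.Pairwise.isChain
    apply List.pairwise_of_forall_mem_list
    intro x hx y hy
    exact hSS x ((hQm x).1 hx).1 y ((hQm y).1 hy).1
  refine ⟨P ++ Q, ⟨by simp [hne], ?_, ?_⟩, ?_, ?_, ?_, ?_⟩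
  · rw [List.isChain_append]
    refine ⟨hP, hQc, ?_⟩
    intro x hx y hy
    rw [List.getLast?_eq_getLast_of_ne_nil hne] at hx
    simp only [hQ, List.head?_cons, Option.mem_def, Option.some.injEq] at hx hy
    subst hx hy
    exact hs2t
  · intro x hx y hy
    have e1 : (P ++ Q).getLast? = some s1 := by
      have : P ++ Q = (P ++ s2 :: rest) ++ [s1] := by simp [hQ]
      rw [this, List.getLast?_concat]
    have e2 : (P ++ Q).head? = some (P.head hne) := by
      rw [List.head?_append, List.head?_eq_some_head hne]; rfl
    rw [e1] at hx
    rw [e2] at hy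
    simp only [Option.mem_def, Option.some.injEq] at hx hy
    subst hx hy
    exact hs1t
  · intro α
    rw [List.count_append]
    by_cases hα : α ∈ Q
    · have h1 : P.count α = 0 := List.count_eq_zero.2 ((hQm α).1 hα).2
      have h2 := List.nodup_iff_count_le_one.1 hQn α
      have h3 := Finsupp.mem_support_iff.1 (hSv ((hQm α).1 hα).1)
      omega
    · rw [List.count_eq_zero.2 hα]
      exact hPv α
  · intro α hα
    by_cases h : α ∈ P
    · exact List.mem_append_left _ h
    · exact List.mem_append_right _ ((hQm α).2 ⟨hα, h⟩)
  · intro α hα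
    exact List.mem_append_left _ hα
  · intro b
    rw [List.map_append, List.count_append]
    have h1 := List.nodup_iff_count_le_one.1 hQs b
    have h2 : (P.map src).count b ≤ (P.map src).length := List.count_le_length
    rw [List.length_map] at h2
    omega

/-- At most two sources are targeted by almost all the core. -/
lemma exists_hard_pair (v : Letter →₀ ℕ) (S : Finset Letter) (hS : 60 ≤ S.card)
    (hv : 2 ≤ (srcs v).card) :
    ∃ d ∈ srcs v, ∃ e ∈ srcs v, d ≠ e ∧
      ∀ x ∈ srcs v, x ≠ d → x ≠ e → 20 ≤ (good S x).card := by
  classical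
  set H := (srcs v).filter (fun x => (good S x).card < 20) with hH
  have hHc : H.card ≤ 2 := by
    by_contra hlt
    push Not at hlt
    obtain ⟨x, hx, y, hy, z, hz, hxy, hxz, hyz⟩ := Finset.two_lt_card.1 hlt
    have h1 : S ⊆ good S x ∪ (good S y ∪ good S z) := by
      intro s hs
      by_contra hn
      simp only [good, Finset.mem_union, Finset.mem_filter, hs, true_and, not_or, not_not] at hn
      have : ({x, y, z} : Finset Atom) ⊆ trg s := by
        intro u hu
        simp only [Finset.mem_insert, Finset.mem_singleton] at hu
        rcases hu with rfl | rfl | rfl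
        · exact hn.1
        · exact hn.2.1
        · exact hn.2.2
      have h2 := Finset.card_le_card this
      rw [trg_card, Finset.card_eq_three.2 ⟨x, y, z, hxy, hxz, hyz, rfl⟩] at h2
      omega
    have h2 := Finset.card_le_card h1
    have h3 := Finset.card_union_le (good S x) (good S y ∪ good S z)
    have h4 := Finset.card_union_le (good S y) (good S z)
    have h5 := (Finset.mem_filter.1 hx).2
    have h6 := (Finset.mem_filter.1 hy).2
    have h7 := (Finset.mem_filter.1 hz).2
    omega
  obtain ⟨D, hHD, hDs, hD⟩ := Finset.exists_subsuperset_card_eq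
    (Finset.filter_subset _ _ : H ⊆ srcs v) hHc hv
  obtain ⟨d, e, hde, rfl⟩ := Finset.card_eq_two.1 hD
  refine ⟨d, hDs (by simp), e, hDs (by simp), hde, ?_⟩
  intro x hx hxd hxe
  by_contra hlt
  push Not at hlt
  have := hHD (Finset.mem_filter.2 ⟨hx, hlt⟩)
  simp [hxd, hxe] at this

/-- The possible ways to reach the sources `d` and `e` from outside. -/
def Reach (v : Letter →₀ ℕ) (d e : Atom) : Prop :=
  (∃ β γ ε, β ∈ v.support ∧ γ ∈ v.support ∧ ε ∈ v.support ∧ src β ≠ d ∧ src β ≠ e ∧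
    d ∉ trg β ∧ src γ = d ∧ e ∉ trg γ ∧ src ε = e) ∨
  (∃ β γ δ ε, β ∈ v.support ∧ γ ∈ v.support ∧ δ ∈ v.support ∧ ε ∈ v.support ∧
    src β ≠ d ∧ src β ≠ e ∧ src γ ≠ d ∧ src γ ≠ e ∧ (β = γ → 2 ≤ v β) ∧
    d ∉ trg β ∧ e ∉ trg γ ∧ src δ = d ∧ src ε = e)

lemma two_le_mass {v : Letter →₀ ℕ} {Q : Set Letter} (h : 2 ≤ mass v Q) (β : Letter) :
    2 ≤ v β ∨ ∃ γ ∈ Q, γ ≠ β ∧ γ ∈ v.support := by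
  classical
  by_contra hno
  push Not at hno
  have : mass v Q ≤ v β := by
    unfold mass
    calc _ ≤ ∑ α ∈ v.support, if α = β then v α else 0 := by
          apply Finset.sum_le_sum
          intro α hα
          by_cases h1 : α ∈ Q
          · have : α = β := by
              by_contra h2
              exact hno.2 α h1 h2 hα
            simp [this]
            split_ifs <;> omega
          · simp [h1]
      _ ≤ v β := by
          rw [Finset.sum_ite_eq']
          split_ifs <;> omega
  omega

lemma reach_aux {v : Letter →₀ ℕ} (hv : NonDeg v) {d e : Atom} (hd : d ∈ srcs v)
    (he : e ∈ srcs v) (hde : d ≠ e) {β : Letter} (hβ : β ∈ v.support) (hβd : src β ≠ d)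
    (hβe : src β ≠ e) (hβt : d ∉ trg β) : Reach v d e ∨ Reach v e d := by
  obtain ⟨δ, hδ, hδs⟩ := mem_srcs.1 hd
  obtain ⟨ε, hε, hεs⟩ := mem_srcs.1 he
  obtain ⟨y, hy⟩ := hv.1 e he
  obtain ⟨hye, -, -, γ, hγ, hγs, hγt⟩ := hy
  by_cases hyd : y = d
  · exact Or.inl (Or.inl ⟨β, γ, ε, hβ, hγ, hε, hβd, hβe, hβt, hγs.trans hyd, hγt, hεs⟩)
  have hγd : src γ ≠ d := by rwa [hγs]
  have hγe : src γ ≠ e := by rwa [hγs]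
  by_cases hβγ : β = γ → 2 ≤ v β
  · exact Or.inl (Or.inr ⟨β, γ, δ, ε, hβ, hγ, hδ, hε, hβd, hβe, hγd, hγe, hβγ, hβt, hγt,
      hδs, hεs⟩)
  push Not at hβγ
  obtain ⟨rfl, hlt⟩ := hβγ
  rcases two_le_mass (hv.2.2 d hd e he hde) β with h | ⟨γ, hγQ, hne, hγv⟩
  · omega
  by_cases h1 : src γ = d
  · rcases hγQ with hγQ | hγQ
    · exact absurd h1 hγQ.2.1
    · exact Or.inl (Or.inl ⟨β, γ, ε, hβ, hγv, hε, hβd, hβe, hβt, h1, hγQ.2.2, hεs⟩)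
  by_cases h2 : src γ = e
  · rcases hγQ with hγQ | hγQ
    · exact Or.inr (Or.inl ⟨β, γ, δ, hβ, hγv, hδ, hβe, hβd, hγt, h2, hγQ.2.2, hδs⟩)
    · exact absurd h2 hγQ.2.1
  rcases hγQ with hγQ | hγQ
  · exact Or.inl (Or.inr ⟨γ, β, δ, ε, hγv, hβ, hδ, hε, h1, h2, hβd, hβe,
      fun h => absurd h hne, hγQ.2.2, hγt, hδs, hεs⟩)
  · exact Or.inl (Or.inr ⟨β, γ, δ, ε, hβ, hγv, hδ, hε, hβd, hβe, h1, h2,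
      fun h => absurd h.symm hne, hβt, hγQ.2.2, hδs, hεs⟩)

lemma reach {v : Letter →₀ ℕ} (hv : NonDeg v) {d e : Atom} (hd : d ∈ srcs v)
    (he : e ∈ srcs v) (hde : d ≠ e) : Reach v d e ∨ Reach v e d := by
  have h := hv.2.1 d hd e he hde
  rw [Set.not_subset] at h
  obtain ⟨x, hx, hxn⟩ := h
  simp only [Set.mem_insert_iff, Set.mem_singleton_iff, not_or] at hxn
  rcases hx with ⟨_, _, _, β, hβ, hβs, hβt⟩ | ⟨_, _, _, β, hβ, hβs, hβt⟩
  · exact reach_aux hv hd he hde hβ (by rw [hβs]; exact hxn.1) (by rw [hβs]; exact hxn.2) hβt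
  · exact (reach_aux hv he hd hde.symm hβ (by rw [hβs]; exact hxn.2)
      (by rw [hβs]; exact hxn.1) hβt).symm

lemma path_of_reach (v : Letter →₀ ℕ) (S : Finset Letter) (hSv : S ⊆ v.support)
    (hinj : Set.InjOn src (S : Set Letter)) {d e : Atom} (hde : d ≠ e)
    (hg : ∀ x ∈ srcs v, x ≠ d → x ≠ e → 20 ≤ (good S x).card) (h : Reach v d e) :
    ∃ P : List Letter, P.IsChain Follows ∧ (∀ α, P.count α ≤ v α) ∧ P.length ≤ 5 ∧
      (∃ hne : P ≠ [], 20 ≤ (good S (src (P.head hne))).card) ∧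
      (∃ α ∈ P, src α = d) ∧ (∃ α ∈ P, src α = e) := by
  have hs : ∀ α ∈ v.support, src α ∈ srcs v := fun α hα => mem_srcs.2 ⟨α, hα, rfl⟩
  have hpos : ∀ α ∈ v.support, 1 ≤ v α := fun α hα =>
    Nat.one_le_iff_ne_zero.2 (Finsupp.mem_support_iff.1 hα)
  rcases h with ⟨β, γ, ε, hβ, hγ, hε, hβd, hβe, hβt, hγs, hγt, hεs⟩ |
    ⟨β, γ, δ, ε, hβ, hγ, hδ, hε, hβd, hβe, hγd, hγe, hβγ, hβt, hγt, hδs, hεs⟩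
  · refine ⟨[β, γ, ε], ?_, ?_, by simp, ⟨by simp, hg _ (hs β hβ) hβd hβe⟩,
      ⟨γ, by simp, hγs⟩, ⟨ε, by simp, hεs⟩⟩
    · simp [Follows, hγs, hεs, hβt, hγt]
    · have hnd : [β, γ, ε].Nodup := by
        simp only [List.nodup_cons, List.mem_cons, List.not_mem_nil, or_false, not_or,
          List.nodup_nil, not_false_eq_true, and_true]
        refine ⟨⟨?_, ?_⟩, ?_⟩
        · rintro rfl; exact hβd hγs
        · rintro rfl; exact hβe hεs
        · rintro rfl; exact hde (hγs.symm.trans hεs)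
      intro α
      by_cases hα : α ∈ [β, γ, ε]
      · refine (List.nodup_iff_count_le_one.1 hnd α).trans (hpos α ?_)
        simp only [List.mem_cons, List.not_mem_nil, or_false] at hα
        rcases hα with rfl | rfl | rfl <;> assumption
      · rw [List.count_eq_zero.2 hα]; exact Nat.zero_le _
  · obtain ⟨s, hsg, hsL, hst⟩ := exists_choice S hinj (good S (src γ))
      (Finset.filter_subset _ _) [β, δ, γ, ε] (trg δ) (by
        have := hg _ (hs γ hγ) hγd hγe
        rw [trg_card]; simp; omega)
    have hsS := (Finset.mem_filter.1 hsg).1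
    have hst' := (Finset.mem_filter.1 hsg).2
    simp only [List.mem_cons, List.not_mem_nil, or_false, not_or] at hsL
    obtain ⟨hsβ, hsδ, hsγ, hsε⟩ := hsL
    refine ⟨[β, δ, s, γ, ε], ?_, ?_, by simp, ⟨by simp, hg _ (hs β hβ) hβd hβe⟩,
      ⟨δ, by simp, hδs⟩, ⟨ε, by simp, hεs⟩⟩
    · simp [Follows, hδs, hεs, hβt, hγt, hst, hst']
    · have n1 : β ≠ δ := by rintro rfl; exact hβd hδs
      have n2 : β ≠ ε := by rintro rfl; exact hβe hεs
      have n3 : γ ≠ δ := by rintro rfl; exact hγd hδs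
      have n4 : γ ≠ ε := by rintro rfl; exact hγe hεs
      have n5 : δ ≠ ε := by rintro rfl; exact hde (hδs.symm.trans hεs)
      have p1 := hpos β hβ
      have p2 := hpos γ hγ
      have p3 := hpos δ hδ
      have p4 := hpos ε hε
      have p5 := hpos s (hSv hsS)
      intro α
      simp only [List.count_cons, List.count_nil, beq_iff_eq]
      grind

lemma exists_word (v : Letter →₀ ℕ) (hN : 300 ≤ (srcs v).card) (hv : NonDeg v) :
    ∃ w, AC w ∧ ∀ α, w.count α = v α := by
  obtain ⟨S, hSc, hSv, hSS, hinj⟩ := exists_core v 60 (by omega)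
  obtain ⟨d, hd, e, he, hde, hg⟩ := exists_hard_pair v S hSc.ge (by omega)
  have hpath : ∃ P : List Letter, P.IsChain Follows ∧ (∀ α, P.count α ≤ v α) ∧ P.length ≤ 5 ∧
      (∃ hne : P ≠ [], 20 ≤ (good S (src (P.head hne))).card) ∧
      (∃ α ∈ P, src α = d) ∧ (∃ α ∈ P, src α = e) := by
    rcases reach hv hd he hde with h | h
    · exact path_of_reach v S hSv hinj hde hg h
    · obtain ⟨P, h1, h2, h3, h4, h5, h6⟩ := path_of_reach v S hSv hinj hde.symm
        (fun x hx h1 h2 => hg x hx h2 h1) h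
      exact ⟨P, h1, h2, h3, h4, h6, h5⟩
  obtain ⟨P, h1, h2, h3, ⟨hne, h4⟩, ⟨αd, hαd, h5⟩, ⟨αe, hαe, h6⟩⟩ := hpath
  obtain ⟨w0, a1, a2, a3, a4, a5⟩ := close_path v S hSv hSS hinj P h1 h2 h3 hne (by omega) h4
  obtain ⟨w, b1, b2, b3⟩ := complete_sources v S 6 (by omega) w0 a1 a2 a3 a5 (by
    intro β hβ hno
    have := hg (src β) (mem_srcs.2 ⟨β, hβ, rfl⟩)
      (fun h => hno αd (a4 _ hαd) (h5.trans h.symm))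
      (fun h => hno αe (a4 _ hαe) (h6.trans h.symm))
    unfold good at this
    omega)
  exact complete_letters v w b1 b2 b3

/-! ### Necessity -/

lemma AC_index {w : List Letter} (h : AC w) (i : ℕ) (hi : i < w.length) :
    Follows (w[i]) (w[(i + 1) % w.length]'(Nat.mod_lt _ (by omega))) := by
  obtain ⟨h1, h2, h3⟩ := h
  by_cases hl : i + 1 < w.length
  · have := List.isChain_iff_getElem.1 h2 i hl
    simpa [Nat.mod_eq_of_lt hl] using this
  · have e : i + 1 = w.length := by omega
    apply h3
    · rw [List.getLast?_eq_getElem?, ← e]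
      simp
    · simp only [e, Nat.mod_self]
      rw [List.head?_eq_getElem?]
      simp

lemma exists_switch (w : List Letter) (p : Letter → Prop) (x y : Letter) (hx : x ∈ w)
    (hy : y ∈ w) (hpx : ¬ p x) (hpy : p y) :
    ∃ (i : ℕ) (hi : i < w.length), ¬ p (w[i]) ∧
      p (w[(i + 1) % w.length]'(Nat.mod_lt _ (by omega))) := by
  by_contra hno
  push Not at hno
  obtain ⟨i, hi, rfl⟩ := List.getElem_of_mem hx
  obtain ⟨j, hj, rfl⟩ := List.getElem_of_mem hy
  have hpos : 0 < w.length := by omega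
  have key : ∀ k, ¬ p (w[(i + k) % w.length]'(Nat.mod_lt _ hpos)) := by
    intro k
    induction k with
    | zero => simpa [Nat.mod_eq_of_lt hi] using hpx
    | succ k ih =>
      have := hno _ (Nat.mod_lt (i + k) hpos) ih
      simpa [Nat.mod_add_mod, Nat.add_assoc] using this
  have := key (j + (w.length - i))
  have e : (i + (j + (w.length - i))) % w.length = j := by
    have : i + (j + (w.length - i)) = j + w.length := by omega
    rw [this, Nat.add_mod_right, Nat.mod_eq_of_lt hj]
  simp only [e] at this
  exact this hpy

lemma two_le_count (w : List Letter) (i j : ℕ) (hi : i < w.length) (hj : j < w.length)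
    (hij : i ≠ j) (h : w[i] = w[j]) : 2 ≤ w.count w[i] := by
  by_contra hlt
  have : ¬ List.Duplicate w[i] w := by rw [List.duplicate_iff_two_le_count]; convert hlt
  rw [List.duplicate_iff_exists_distinct_get] at this
  apply this
  rcases lt_or_gt_of_ne hij with h1 | h1
  · exact ⟨⟨i, hi⟩, ⟨j, hj⟩, h1, by simp, by simpa using h⟩
  · exact ⟨⟨j, hj⟩, ⟨i, hi⟩, h1, by simpa using h, by simp⟩

lemma mass_two (v : Letter →₀ ℕ) (Q : Set Letter) (α β : Letter) (hα : α ∈ Q) (hβ : β ∈ Q)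
    (hαv : α ∈ v.support) (hβv : β ∈ v.support) (h : α = β → 2 ≤ v α) : 2 ≤ mass v Q := by
  classical
  unfold mass
  by_cases e : α = β
  · refine (h e).trans ?_
    have := Finset.single_le_sum (f := fun α => if α ∈ Q then v α else 0)
      (fun _ _ => Nat.zero_le _) hαv
    simpa [hα] using this
  · have h1 : ({α, β} : Finset Letter) ⊆ v.support := by
      intro x hx
      simp only [Finset.mem_insert, Finset.mem_singleton] at hx
      rcases hx with rfl | rfl <;> assumption
    have h2 := Finset.sum_le_sum_of_subset (f := fun α => if α ∈ Q then v α else 0) h1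
    rw [Finset.sum_pair e] at h2
    simp only [hα, hβ, if_true] at h2
    have p1 := Finsupp.mem_support_iff.1 hαv
    have p2 := Finsupp.mem_support_iff.1 hβv
    refine le_trans ?_ h2
    omega

lemma nondeg_of_word (v : Letter →₀ ℕ) (hN : 300 ≤ (srcs v).card) (w : List Letter)
    (hw : AC w) (hc : ∀ α, w.count α = v α) : NonDeg v := by
  have hmem : ∀ α, α ∈ w ↔ α ∈ v.support := by
    intro α
    rw [Finsupp.mem_support_iff, ← hc, ← List.count_pos_iff]
    omega
  have hsrc : ∀ α ∈ w, src α ∈ srcs v := fun α h => mem_srcs.2 ⟨α, (hmem α).1 h, rfl⟩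
  -- some letter avoids any two given sources
  have hout : ∀ d e : Atom, ∃ x ∈ w, src x ≠ d ∧ src x ≠ e := by
    intro d e
    have : ∃ a ∈ srcs v, a ∉ ({d, e} : Finset Atom) := by
      apply Finset.exists_mem_notMem_of_card_lt_card
      have := Finset.card_le_two (a := d) (b := e)
      omega
    obtain ⟨a, ha, hn⟩ := this
    obtain ⟨x, hx, rfl⟩ := mem_srcs.1 ha
    simp only [Finset.mem_insert, Finset.mem_singleton, not_or] at hn
    exact ⟨x, (hmem x).2 hx, hn⟩
  have hin : ∀ e ∈ srcs v, ∃ y ∈ w, src y = e := by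
    intro e he
    obtain ⟨y, hy, h⟩ := mem_srcs.1 he
    exact ⟨y, (hmem y).2 hy, h⟩
  have hentry : ∀ e ∈ srcs v, ∃ (i : ℕ) (hi : i < w.length), src w[i] ≠ e ∧ e ∉ trg w[i] ∧
      src (w[(i + 1) % w.length]'(Nat.mod_lt _ (by omega))) = e := by
    intro e he
    obtain ⟨y, hy, hye⟩ := hin e he
    obtain ⟨x, hx, hxe, -⟩ := hout e e
    obtain ⟨i, hi, h1, h2⟩ := exists_switch w (fun α => src α = e) x y hx hy hxe hye
    refine ⟨i, hi, h1, ?_, h2⟩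
    have := AC_index hw i hi
    unfold Follows at this
    rwa [h2] at this
  refine ⟨?_, ?_, ?_⟩
  · intro e he
    obtain ⟨i, hi, h1, h2, h3⟩ := hentry e he
    exact ⟨src w[i], h1, hsrc _ (List.getElem_mem _), he, w[i],
      (hmem _).1 (List.getElem_mem _), rfl, h2⟩
  · intro d hd e he hde hsub
    obtain ⟨y, hy, hyd⟩ := hin d hd
    obtain ⟨x, hx, hxd, hxe⟩ := hout d e
    obtain ⟨i, hi, h1, h2⟩ := exists_switch w (fun α => src α = d ∨ src α = e) x y hx hy
      (by simp [hxd, hxe]) (Or.inl hyd)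
    have h3 := AC_index hw i hi
    unfold Follows at h3
    push Not at h1
    have h4 : src w[i] ∈ inn v d ∪ inn v e := by
      rcases h2 with h2 | h2 <;> rw [h2] at h3
      · exact Or.inl ⟨h1.1, hsrc _ (List.getElem_mem _), hd, w[i],
          (hmem _).1 (List.getElem_mem _), rfl, h3⟩
      · exact Or.inr ⟨h1.2, hsrc _ (List.getElem_mem _), he, w[i],
          (hmem _).1 (List.getElem_mem _), rfl, h3⟩
    have h5 := hsub h4
    simp [h1.1, h1.2] at h5
  · intro d hd e he hde
    obtain ⟨i, hi, i1, i2, i3⟩ := hentry d hd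
    obtain ⟨j, hj, j1, j2, j3⟩ := hentry e he
    have hij : i ≠ j := by
      rintro rfl
      exact hde (i3.symm.trans j3)
    have mi := (hmem w[i]).1 (List.getElem_mem _)
    have mj := (hmem w[j]).1 (List.getElem_mem _)
    refine mass_two v _ w[i] w[j] (Or.inl ⟨mi, i1, i2⟩) (Or.inr ⟨mj, j1, j2⟩) mi mj ?_
    intro h
    rw [← hc]
    exact two_le_count w i j hi hj hij h

/-- For data vectors over Σ of sufficiently large order, being the Parikh image
of an anti-cycle is equivalent to non-degeneracy. -/
theorem anticycle_iff_nondeg :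
    ∃ N : ℕ, ∀ v : Letter →₀ ℕ, N ≤ (srcs v).card →
      ((∃ w : List Letter, IsAntiCycle w ∧ ∀ α : Letter, w.count α = v α) ↔
        NonDeg v) := by
  refine ⟨300, fun v hN => ⟨?_, ?_⟩⟩
  · rintro ⟨w, hw, hc⟩
    exact nondeg_of_word v hN w ((isAntiCycle_iff w).1 hw) hc
  · intro hv
    obtain ⟨w, hw, hc⟩ := exists_word v hN hv
    exact ⟨w, (isAntiCycle_iff w).2 hw, hc⟩
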